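/- (Consistency of the Horvitz–Thompson variance estimator.) Fix K ≥ 2 and an arm k. Consider a sequence of experiments: X⁽ⁿ⁾ ∈ ℝ^{n×d_n} with unit-norm rows, potential outcomes with max_i |Y_i(k)| uniformly bounded, step sizes η_n > 0 with η_n ‖X⁽ⁿ⁾X⁽ⁿ⁾ᵀ − I_n‖_op → 0 and n² η_n² ‖X⁽ⁿ⁾X⁽ⁿ⁾ᵀ − I_n‖_op² → 0. Let Σ_η be the one-step PGD-Gauss solution, T ~ N(0, Σ_η), D_i = g(T_i), and define the variance estimator V̂_η = (K²/n) Σ_{i,j=1}^{n} Y_i(D_i) Y_j(D_j) f_k(Σ_{η,ij}) · 1{D_i = k, D_j = k} / P(D_i = k, D_j = k), where P(D_i = k, D_j = k) = f_k(Σ_{η,ij}) + 1/K². Then for all sufficiently large n all denominators are strictly positive (so V̂_η is well-defined), E[V̂_η] = V(Σ_η) := (K²/n) Y(k)ᵀ f_k(Σ_η) Y(k), and Var(V̂_η) → 0. -/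

import Mathlib

open MeasureTheory ProbabilityTheory Matrix Real Filter
open scoped BigOperators ENNReal NNReal Topology

noncomputable section

/-- The spectral (operator) norm of a square real matrix. -/
def opNorm {m : ℕ} (A : Matrix (Fin m) (Fin m) ℝ) : ℝ :=
  ‖(Matrix.toEuclideanCLM (𝕜 := ℝ) A : EuclideanSpace ℝ (Fin m) →L[ℝ] EuclideanSpace ℝ (Fin m))‖

/-- The standard normal CDF `Φ`. -/
def stdGaussianCDF (x : ℝ) : ℝ := (gaussianReal 0 1 (Set.Iic x)).toReal

/-- The set of values `t` mapped by the Gaussianization map `g` to arm `k`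
(arms are `0`-indexed: `k : Fin K` represents arm `k+1`; `q m = Φ⁻¹(m/K)`). -/
def armSet (q : ℕ → ℝ) (K : ℕ) (k : Fin K) : Set ℝ :=
  if k.val = 0 then Set.Iic (q 1)
  else if k.val = K - 1 then Set.Ioi (q (K - 1))
  else Set.Ioc (q k.val) (q (k.val + 1))

/-- The function `r_{i,j}(ρ)`. -/
def rfun (q : ℕ → ℝ) (i j : ℕ) (ρ : ℝ) : ℝ :=
  ∫ r in (0 : ℝ)..ρ,
    (2 * π * Real.sqrt (1 - r ^ 2))⁻¹ *
      Real.exp (-((q i ^ 2 + q j ^ 2 - 2 * r * q i * q j) / (2 * (1 - r ^ 2))))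

/-- The function `f_k` (arms `0`-indexed: `k : Fin K` represents arm `k+1`). -/
def fkfun (q : ℕ → ℝ) (K : ℕ) (k : Fin K) (ρ : ℝ) : ℝ :=
  if k.val = 0 then rfun q 1 1 ρ
  else if k.val = K - 1 then rfun q (K - 1) (K - 1) ρ
  else rfun q k.val k.val ρ + rfun q (k.val + 1) (k.val + 1) ρ
    - 2 * rfun q k.val (k.val + 1) ρ

/-- The one-step PGD-Gauss solution `Σ_η = D⁻¹ U² D⁻¹`, where
`U = I − η c (XXᵀ − I)` with `c = f_k′(0)` and `D` is the diagonal matrix whose `i`-th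
diagonal entry is the Euclidean norm of the `i`-th row of `U`. -/
def pgd {n d : ℕ} (X : Matrix (Fin n) (Fin d) ℝ) (η c : ℝ) : Matrix (Fin n) (Fin n) ℝ :=
  let U : Matrix (Fin n) (Fin n) ℝ := 1 - (η * c) • (X * Xᵀ - 1)
  Matrix.of fun i j =>
    (U * U) i j / (Real.sqrt (∑ l, U i l ^ 2) * Real.sqrt (∑ l, U j l ^ 2))


/-- reference bivariate law -/
def bivLaw (ρ : ℝ) : Measure (ℝ × ℝ) :=
  Measure.map (fun z : ℝ × ℝ => (z.1, ρ * z.1 + Real.sqrt (1 - ρ ^ 2) * z.2))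
    ((gaussianReal 0 1).prod (gaussianReal 0 1))

lemma charint_pi {n : ℕ} (w : Fin n → ℝ) :
    ∫ z, Complex.exp (((∑ l, w l * z l : ℝ) : ℂ) * Complex.I)
      ∂(Measure.pi fun _ : Fin n => gaussianReal 0 1) = Complex.exp (-(∑ l, w l ^ 2 : ℝ) / 2) := by
  have h := charFun_stdGaussian (WithLp.toLp 2 w : EuclideanSpace ℝ (Fin n))
  rw [← map_pi_eq_stdGaussian, charFun_apply, integral_map (by fun_prop) (by fun_prop)] at h
  simp only [PiLp.inner_apply, RCLike.inner_apply, conj_trivial] at h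
  rw [h, ← Complex.ofReal_pow, EuclideanSpace.real_norm_sq_eq]

lemma charint_one (w : ℝ) :
    ∫ z, Complex.exp (((w * z : ℝ) : ℂ) * Complex.I) ∂(gaussianReal 0 1)
      = Complex.exp (-(w ^ 2 : ℝ) / 2) := by
  have h := charFun_gaussianReal (μ := 0) (v := 1) w
  rw [charFun_apply_real] at h
  push_cast at h ⊢
  rw [h]; congr 1; simp; ring

lemma law_pair {n : ℕ} (u v : Fin n → ℝ) (ρ : ℝ) (hρ : ρ ^ 2 ≤ 1) (hu : ∑ l, u l ^ 2 = 1)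
    (hv : ∑ l, v l ^ 2 = 1) (huv : ∑ l, u l * v l = ρ) :
    Measure.map (fun z : Fin n → ℝ => (∑ l, u l * z l, ∑ l, v l * z l))
      (Measure.pi fun _ : Fin n => gaussianReal 0 1) = bivLaw ρ := by
  have : IsProbabilityMeasure (bivLaw ρ) := by
    unfold bivLaw; exact Measure.isProbabilityMeasure_map (by fun_prop)
  have : IsProbabilityMeasure (Measure.map (fun z : Fin n → ℝ => (∑ l, u l * z l, ∑ l, v l * z l))
      (Measure.pi fun _ : Fin n => gaussianReal 0 1)) :=
    Measure.isProbabilityMeasure_map (by fun_prop)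
  apply Measure.ext_of_charFunDual
  ext L
  have hL : ∀ x y : ℝ, L (x, y) = L (1, 0) * x + L (0, 1) * y := by
    intro x y
    have : ((x, y) : ℝ × ℝ) = x • (1, 0) + y • (0, 1) := by simp
    rw [this, map_add, map_smul, map_smul]; simp; ring
  set s := L (1, 0)
  set t := L (0, 1)
  rw [charFunDual_apply, charFunDual_apply, bivLaw, integral_map (by fun_prop) (by fun_prop),
    integral_map (by fun_prop) (by fun_prop)]
  simp only [hL]
  have e1 : ∀ z : Fin n → ℝ, s * ∑ l, u l * z l + t * ∑ l, v l * z l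
      = ∑ l, (s * u l + t * v l) * z l := by
    intro z; rw [Finset.mul_sum, Finset.mul_sum, ← Finset.sum_add_distrib]
    exact Finset.sum_congr rfl fun l _ => by ring
  simp only [e1]
  rw [charint_pi]
  have e2 : ∑ l, (s * u l + t * v l) ^ 2 = s ^ 2 + t ^ 2 + 2 * s * t * ρ := by
    have : ∀ l, (s * u l + t * v l) ^ 2 = s ^ 2 * u l ^ 2 + t ^ 2 * v l ^ 2
      + 2 * s * t * (u l * v l) := fun l => by ring
    simp only [this, Finset.sum_add_distrib, ← Finset.mul_sum, hu, hv, huv]; ring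
  rw [e2]
  have e3 : ∀ z : ℝ × ℝ, Complex.exp (((s * z.1 + t * (ρ * z.1 + √(1 - ρ ^ 2) * z.2) : ℝ) : ℂ)
      * Complex.I) = Complex.exp ((((s + t * ρ) * z.1 : ℝ) : ℂ) * Complex.I) *
        Complex.exp ((((t * √(1 - ρ ^ 2)) * z.2 : ℝ) : ℂ) * Complex.I) := by
    intro z; rw [← Complex.exp_add]; congr 1; push_cast; ring
  simp only [e3]
  rw [integral_prod_mul (fun x : ℝ => Complex.exp ((((s + t * ρ) * x : ℝ) : ℂ) * Complex.I))
    (fun y : ℝ => Complex.exp ((((t * √(1 - ρ ^ 2)) * y : ℝ) : ℂ) * Complex.I)),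
    charint_one, charint_one, ← Complex.exp_add]
  congr 1
  have : (t * √(1 - ρ ^ 2)) ^ 2 = t ^ 2 * (1 - ρ ^ 2) := by
    rw [mul_pow, Real.sq_sqrt (by linarith)]
  rw [this]; push_cast; ring


/-- standard normal density -/
def nphi (x : ℝ) : ℝ := (√(2 * π))⁻¹ * Real.exp (-x ^ 2 / 2)

lemma nphi_eq : gaussianPDFReal 0 1 = nphi := by
  ext x; simp [gaussianPDFReal, nphi]

lemma nphi_cont : Continuous nphi := by unfold nphi; fun_prop

lemma nphi_nonneg (x : ℝ) : 0 ≤ nphi x := by unfold nphi; positivity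

lemma nphi_le_one (x : ℝ) : nphi x ≤ 1 := by
  unfold nphi
  have h1 : (√(2 * π))⁻¹ ≤ 1 := by
    apply inv_le_one_of_one_le₀
    rw [Real.one_le_sqrt]
    nlinarith [Real.pi_gt_three]
  have h2 : Real.exp (-x ^ 2 / 2) ≤ 1 := by
    rw [Real.exp_le_one_iff]; nlinarith [sq_nonneg x]
  calc _ ≤ 1 * 1 := mul_le_mul h1 h2 (Real.exp_nonneg _) (by norm_num)
    _ = 1 := by norm_num

lemma nphi_integrable : Integrable nphi := by
  rw [← nphi_eq]; exact integrable_gaussianPDFReal 0 1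

lemma cdf_eq (x : ℝ) : stdGaussianCDF x = ∫ t in Set.Iic x, nphi t := by
  unfold stdGaussianCDF
  rw [gaussianReal_apply_eq_integral 0 one_ne_zero, nphi_eq, ENNReal.toReal_ofReal]
  exact setIntegral_nonneg measurableSet_Iic fun t _ => nphi_nonneg t

lemma cdf_deriv (x : ℝ) : HasDerivAt stdGaussianCDF (nphi x) x := by
  have : stdGaussianCDF = fun y => stdGaussianCDF 0 + ∫ t in (0:ℝ)..y, nphi t := by
    ext y
    rw [← intervalIntegral.integral_Iic_sub_Iic nphi_integrable.integrableOn
      nphi_integrable.integrableOn, cdf_eq, cdf_eq]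
    ring
  rw [this]
  exact (intervalIntegral.integral_hasDerivAt_right (nphi_cont.intervalIntegrable _ _)
    (nphi_cont.stronglyMeasurableAtFilter _ _) nphi_cont.continuousAt).const_add _

lemma cdf_cont : Continuous stdGaussianCDF :=
  continuous_iff_continuousAt.2 fun x => (cdf_deriv x).continuousAt

lemma cdf_nonneg (x : ℝ) : 0 ≤ stdGaussianCDF x := ENNReal.toReal_nonneg

lemma cdf_le_one (x : ℝ) : stdGaussianCDF x ≤ 1 := by
  unfold stdGaussianCDF; exact measureReal_le_one

lemma nphi_x_integrable : Integrable (fun x => nphi x * |x|) := by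
  have h := integrable_mul_exp_neg_mul_sq (b := 1 / 2) (by norm_num)
  have h2 := (h.norm.const_mul (√(2 * π))⁻¹)
  refine h2.congr (Eventually.of_forall fun x => ?_)
  simp only [norm_mul, Real.norm_eq_abs, Real.abs_exp, nphi]
  rw [show -(1 / 2) * x ^ 2 = -x ^ 2 / 2 by ring]; ring

lemma arg_deriv (b x ρ : ℝ) (h : 0 < 1 - ρ ^ 2) :
    HasDerivAt (fun r => (b - r * x) / √(1 - r ^ 2))
      ((ρ * b - x) / ((1 - ρ ^ 2) * √(1 - ρ ^ 2))) ρ := by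
  have h1 : HasDerivAt (fun r : ℝ => 1 - r ^ 2) (-(2 * ρ)) ρ := by
    simpa using (hasDerivAt_pow 2 ρ).const_sub 1
  have h2 := h1.sqrt h.ne'
  have h3 : HasDerivAt (fun r => b - r * x) (-x) ρ := by
    simpa using ((hasDerivAt_id ρ).mul_const x).const_sub b
  have hs : 0 < √(1 - ρ ^ 2) := Real.sqrt_pos.2 h
  have hss := Real.sq_sqrt h.le
  refine (h3.div h2 hs.ne').congr_deriv ?_
  set s := √(1 - ρ ^ 2)
  rw [← hss]
  field_simp
  rw [hss]; ring

/-- bivariate density -/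
def biphi (a b r : ℝ) : ℝ := (2 * π * Real.sqrt (1 - r ^ 2))⁻¹ *
      Real.exp (-((a ^ 2 + b ^ 2 - 2 * r * a * b) / (2 * (1 - r ^ 2))))

lemma nphi_mul (b x ρ : ℝ) (h : 0 < 1 - ρ ^ 2) :
    nphi x * nphi ((b - ρ * x) / √(1 - ρ ^ 2)) = nphi b * nphi ((x - ρ * b) / √(1 - ρ ^ 2)) := by
  unfold nphi
  have e : ∀ A B C D c : ℝ, A + B = C + D → c * Real.exp A * (c * Real.exp B)
      = c * Real.exp C * (c * Real.exp D) := by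
    intro A B C D c h
    calc _ = c ^ 2 * Real.exp (A + B) := by rw [Real.exp_add]; ring
      _ = _ := by rw [h, Real.exp_add]; ring
  apply e
  rw [div_pow, div_pow, Real.sq_sqrt h.le]
  field_simp
  ring

lemma nphi_biphi (a b ρ : ℝ) (h : 0 < 1 - ρ ^ 2) :
    nphi b * nphi ((a - ρ * b) / √(1 - ρ ^ 2)) / √(1 - ρ ^ 2) = biphi a b ρ := by
  unfold nphi biphi
  have hs : 0 < √(1 - ρ ^ 2) := Real.sqrt_pos.2 h
  have hp : √(2 * π) ^ 2 = 2 * π := Real.sq_sqrt (by positivity)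
  have e : ∀ A B C c s : ℝ, 0 < s → 0 < c → A + B = C → c⁻¹ * Real.exp A * (c⁻¹ * Real.exp B) / s
      = (c ^ 2 * s)⁻¹ * Real.exp C := by
    intro A B C c s h h0 hh
    rw [← hh, Real.exp_add]; field_simp
  rw [e _ _ (-((a ^ 2 + b ^ 2 - 2 * ρ * a * b) / (2 * (1 - ρ ^ 2)))) _ _ hs (by positivity), hp]
  rw [div_pow, Real.sq_sqrt h.le]
  field_simp
  ring

lemma nphi_deriv (x : ℝ) : HasDerivAt nphi (-x * nphi x) x := by
  unfold nphi
  have h1 : HasDerivAt (fun y : ℝ => -y ^ 2 / 2) (-x) x := by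
    refine ((hasDerivAt_pow 2 x).neg.div_const 2).congr_deriv ?_
    simp; ring
  refine (h1.exp.const_mul _).congr_deriv ?_
  ring

lemma nphi_tendsto_atBot : Tendsto nphi atBot (𝓝 0) := by
  unfold nphi
  have : Tendsto (fun x : ℝ => -x ^ 2 / 2) atBot atBot := by
    have h : Tendsto (fun x : ℝ => x ^ 2) atBot atTop := by
      have := (tendsto_pow_atTop (α := ℝ) (two_ne_zero)).comp tendsto_neg_atBot_atTop
      refine this.congr fun x => by simp
    exact (tendsto_neg_atTop_atBot.comp h).atBot_div_const (by norm_num)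
  simpa using (Real.tendsto_exp_atBot.comp this).const_mul (√(2 * π))⁻¹

/-- `F(ρ)` in integral form -/
def Gint (a b ρ : ℝ) : ℝ :=
  ∫ x in Set.Iic a, nphi x * stdGaussianCDF ((b - ρ * x) / √(1 - ρ ^ 2))

lemma Gint_deriv (a b ρ : ℝ) (hρ : |ρ| < 1) : HasDerivAt (Gint a b) (biphi a b ρ) ρ := by
  obtain ⟨c, hc1, hc2⟩ := exists_between hρ
  have hc0 : 0 < c := (abs_nonneg _).trans_lt hc1
  have hpos : ∀ r ∈ Metric.ball (0:ℝ) c, 1 - c ^ 2 ≤ 1 - r ^ 2 := by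
    intro r hr
    rw [mem_ball_zero_iff, Real.norm_eq_abs] at hr
    have : r ^ 2 ≤ c ^ 2 := by rw [← sq_abs]; gcongr
    linarith
  have hcc : 0 < 1 - c ^ 2 := by nlinarith
  have hmem : ρ ∈ Metric.ball (0:ℝ) c := by simpa using hc1
  have key := hasDerivAt_integral_of_dominated_loc_of_deriv_le (𝕜 := ℝ)
    (μ := volume.restrict (Set.Iic a)) (x₀ := ρ) (s := Metric.ball 0 c)
    (F := fun r x => nphi x * stdGaussianCDF ((b - r * x) / √(1 - r ^ 2)))
    (F' := fun r x => nphi x * (nphi ((b - r * x) / √(1 - r ^ 2)) *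
      ((r * b - x) / ((1 - r ^ 2) * √(1 - r ^ 2)))))
    (bound := fun x => (nphi x * |b| + nphi x * |x|) * ((1 - c ^ 2) * √(1 - c ^ 2))⁻¹)
    (Metric.isOpen_ball.mem_nhds hmem) ?_ ?_ ?_ ?_ ?_ ?_
  · refine key.2.congr_deriv ?_
    have h := hpos ρ hmem
    have h0 : 0 < 1 - ρ ^ 2 := by linarith
    have hs : 0 < √(1 - ρ ^ 2) := Real.sqrt_pos.2 h0
    have hss := Real.sq_sqrt h0.le
    have := integral_Iic_of_hasDerivAt_of_tendsto' (a := a) (m := 0)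
      (f := fun x => nphi b * nphi ((x - ρ * b) / √(1 - ρ ^ 2)) / √(1 - ρ ^ 2))
      (f' := fun x => nphi x * (nphi ((b - ρ * x) / √(1 - ρ ^ 2)) *
        ((ρ * b - x) / ((1 - ρ ^ 2) * √(1 - ρ ^ 2))))) ?_ key.1 ?_
    · rw [this, nphi_biphi _ _ _ h0, sub_zero]
    · intro x _
      have h1 : HasDerivAt (fun x => (x - ρ * b) / √(1 - ρ ^ 2)) (1 / √(1 - ρ ^ 2)) x :=
        ((hasDerivAt_id x).sub_const _).div_const _
      refine ((((nphi_deriv _).comp x h1).const_mul (nphi b)).div_const _).congr_deriv ?_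
      have hm := nphi_mul b x ρ h0
      rw [← mul_assoc (nphi x), hm]
      set s := √(1 - ρ ^ 2)
      rw [← hss]
      field_simp
      ring
    · have h1 : Tendsto (fun x => (x - ρ * b) / √(1 - ρ ^ 2)) atBot atBot :=
        (tendsto_atBot_add_const_right _ (-(ρ * b)) tendsto_id).atBot_div_const hs
      simpa using ((nphi_tendsto_atBot.comp h1).const_mul (nphi b)).div_const (√(1 - ρ ^ 2))
  · refine Eventually.of_forall fun r => ?_
    exact (nphi_cont.mul (cdf_cont.comp (by fun_prop))).aestronglyMeasurable
  · refine Integrable.mono' nphi_integrable.integrableOn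
      (nphi_cont.mul (cdf_cont.comp (by fun_prop))).aestronglyMeasurable ?_
    refine Eventually.of_forall fun x => ?_
    rw [norm_mul, Real.norm_of_nonneg (nphi_nonneg _), Real.norm_of_nonneg (cdf_nonneg _)]
    exact mul_le_of_le_one_right (nphi_nonneg _) (cdf_le_one _)
  · exact (nphi_cont.mul ((nphi_cont.comp (by fun_prop)).mul (by fun_prop))).aestronglyMeasurable
  · refine Eventually.of_forall fun x r hr => ?_
    have h := hpos r hr
    have h0 : 0 < 1 - r ^ 2 := by linarith
    have hr1 : |r| ≤ 1 := by
      rw [← sq_le_one_iff_abs_le_one]; linarith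
    rw [norm_mul, norm_mul, Real.norm_of_nonneg (nphi_nonneg _), Real.norm_of_nonneg (nphi_nonneg _),
      norm_div, Real.norm_eq_abs, Real.norm_eq_abs,
      abs_of_nonneg (mul_nonneg h0.le (Real.sqrt_nonneg _)), div_eq_mul_inv]
    have h1 : |r * b - x| ≤ |b| + |x| := by
      calc |r * b - x| ≤ |r * b| + |x| := abs_sub _ _
        _ ≤ _ := by rw [abs_mul]; nlinarith [abs_nonneg b]
    have h2 : ((1 - r ^ 2) * √(1 - r ^ 2))⁻¹ ≤ ((1 - c ^ 2) * √(1 - c ^ 2))⁻¹ := by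
      have := Real.sqrt_pos.2 hcc
      gcongr
    rw [← mul_add, mul_assoc]
    refine mul_le_mul_of_nonneg_left ?_ (nphi_nonneg _)
    calc _ ≤ 1 * (|r * b - x| * ((1 - r ^ 2) * √(1 - r ^ 2))⁻¹) := by
          refine mul_le_mul_of_nonneg_right (nphi_le_one _) (by positivity)
      _ ≤ _ := by
          rw [one_mul]
          exact mul_le_mul h1 h2 (by positivity) (by positivity)
  · exact (((nphi_integrable.mul_const _).add nphi_x_integrable).mul_const _).integrableOn
  · refine Eventually.of_forall fun x r hr => ?_
    have h0 : 0 < 1 - r ^ 2 := by linarith [hpos r hr]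
    exact ((cdf_deriv _).comp r (arg_deriv b x r h0)).const_mul _


instance bivLaw_prob (ρ : ℝ) : IsProbabilityMeasure (bivLaw ρ) := by
  unfold bivLaw; exact Measure.isProbabilityMeasure_map (by fun_prop)

/-- bivariate CDF -/
def Fbiv (a b ρ : ℝ) : ℝ := (bivLaw ρ).real (Set.Iic a ×ˢ Set.Iic b)

lemma Fbiv_eq (a b ρ : ℝ) : Fbiv a b ρ = ((gaussianReal 0 1).prod (gaussianReal 0 1)).real
    {z : ℝ × ℝ | z.1 ≤ a ∧ ρ * z.1 + √(1 - ρ ^ 2) * z.2 ≤ b} := by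
  unfold Fbiv bivLaw
  rw [map_measureReal_apply (by fun_prop) (measurableSet_Iic.prod measurableSet_Iic)]
  rfl

lemma biv_meas (a b ρ : ℝ) :
    MeasurableSet {z : ℝ × ℝ | z.1 ≤ a ∧ ρ * z.1 + √(1 - ρ ^ 2) * z.2 ≤ b} := by
  have h1 : MeasurableSet {z : ℝ × ℝ | z.1 ≤ a} := measurableSet_le (by fun_prop) (by fun_prop)
  have h2 : MeasurableSet {z : ℝ × ℝ | ρ * z.1 + √(1 - ρ ^ 2) * z.2 ≤ b} :=
    measurableSet_le (by fun_prop) (by fun_prop)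
  exact h1.inter h2

lemma Fbiv_Gint (a b ρ : ℝ) (hρ : |ρ| < 1) : Fbiv a b ρ = Gint a b ρ := by
  have h0 : 0 < 1 - ρ ^ 2 := by
    have := (sq_lt_one_iff_abs_lt_one ρ).2 hρ
    linarith
  have hs : 0 < √(1 - ρ ^ 2) := Real.sqrt_pos.2 h0
  rw [Fbiv_eq, measureReal_def, Measure.prod_apply (biv_meas a b ρ), Gint,
    ← integral_toReal (measurable_measure_prodMk_left (biv_meas a b ρ)).aemeasurable
      (Eventually.of_forall fun x => measure_lt_top _ _),
    integral_gaussianReal_eq_integral_smul one_ne_zero, nphi_eq,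
    ← integral_indicator measurableSet_Iic]
  congr 1
  ext x
  by_cases hx : x ≤ a
  · rw [Set.indicator_of_mem (by simpa using hx), smul_eq_mul, stdGaussianCDF]
    congr 3
    ext y
    simp only [Set.mem_preimage, Set.mem_ofPred_eq, Set.mem_Iic, hx, true_and, le_div_iff₀ hs]
    constructor <;> intro h <;> linarith
  · rw [Set.indicator_of_notMem (by simpa using hx)]
    simp [hx]

lemma Gint_zero (a b : ℝ) : Gint a b 0 = stdGaussianCDF a * stdGaussianCDF b := by
  unfold Gint
  simp only [zero_mul, sub_zero, ne_eq, OfNat.ofNat_ne_zero, not_false_eq_true, zero_pow,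
    Real.sqrt_one, div_one]
  rw [integral_mul_const, ← cdf_eq]

lemma Fbiv_cont_one (a b : ℝ) : Tendsto (Fbiv a b) (𝓝 1) (𝓝 (Fbiv a b 1)) := by
  have : Tendsto (fun ρ => ((gaussianReal 0 1).prod (gaussianReal 0 1))
      {z : ℝ × ℝ | z.1 ≤ a ∧ ρ * z.1 + √(1 - ρ ^ 2) * z.2 ≤ b}) (𝓝 1)
      (𝓝 (((gaussianReal 0 1).prod (gaussianReal 0 1))
      {z : ℝ × ℝ | z.1 ≤ a ∧ 1 * z.1 + √(1 - 1 ^ 2) * z.2 ≤ b})) := by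
    apply tendsto_measure_of_ae_tendsto_indicator_of_isFiniteMeasure (𝓝 1)
      (biv_meas a b 1) (fun ρ => biv_meas a b ρ)
    have hne : ∀ᵐ z ∂((gaussianReal 0 1).prod (gaussianReal 0 1)), z.1 ≠ b := by
      have : NullSingletonClass (gaussianReal 0 1) := nullSingletonClass_gaussianReal one_ne_zero
      have h1 : ∀ᵐ x ∂(gaussianReal 0 1), x ≠ b := by
        rw [ae_iff]; simp
      exact Measure.quasiMeasurePreserving_fst.ae h1
    filter_upwards [hne] with z hz
    have hc : Continuous fun ρ : ℝ => ρ * z.1 + √(1 - ρ ^ 2) * z.2 := by fun_prop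
    have ht : Tendsto (fun ρ : ℝ => ρ * z.1 + √(1 - ρ ^ 2) * z.2) (𝓝 1) (𝓝 z.1) := by
      simpa using hc.tendsto 1
    rcases lt_or_gt_of_ne hz with h | h
    · filter_upwards [ht.eventually_lt_const h] with ρ hρ
      simp [hρ.le, h.le]
    · filter_upwards [ht.eventually_const_lt h] with ρ hρ
      simp [not_le.2 hρ, not_le.2 h]
  have h2 := (ENNReal.tendsto_toReal (measure_ne_top _ _)).comp this
  rw [Fbiv_eq]
  refine h2.congr fun ρ => ?_
  rw [Fbiv_eq]; rfl

lemma Fbiv_deriv (a b ρ : ℝ) (hρ : |ρ| < 1) : HasDerivAt (Fbiv a b) (biphi a b ρ) ρ := by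
  refine (Gint_deriv a b ρ hρ).congr_of_eventuallyEq ?_
  filter_upwards [continuous_abs.continuousAt.eventually_lt continuousAt_const hρ] with r hr
  exact Fbiv_Gint a b r hr

lemma biphi_nonneg (a b r : ℝ) : 0 ≤ biphi a b r := by unfold biphi; positivity

lemma Fbiv_formula (a b ρ : ℝ) (h1 : -1 < ρ) (h2 : ρ ≤ 1) :
    Fbiv a b ρ = stdGaussianCDF a * stdGaussianCDF b + ∫ r in (0:ℝ)..ρ, biphi a b r := by
  have hcont : ContinuousOn (Fbiv a b) (Set.uIcc 0 ρ) := by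
    intro x hx
    rw [Set.mem_uIcc] at hx
    by_cases hx1 : x = 1
    · rw [hx1]; exact ContinuousAt.continuousWithinAt (Fbiv_cont_one a b)
    · have : |x| < 1 := by
        rw [abs_lt]
        constructor
        · rcases hx with h | h <;> linarith
        · apply lt_of_le_of_ne _ hx1
          rcases hx with h | h <;> linarith
      exact (Fbiv_deriv a b x this).continuousAt.continuousWithinAt
  have hder : ∀ x ∈ Set.Ioo (min 0 ρ) (max 0 ρ), HasDerivAt (Fbiv a b) (biphi a b x) x := by
    intro x hx
    apply Fbiv_deriv
    rw [abs_lt]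
    rcases le_total 0 ρ with h | h
    · rw [min_eq_left h, max_eq_right h] at hx
      exact ⟨by linarith [hx.1], by linarith [hx.2]⟩
    · rw [min_eq_right h, max_eq_left h] at hx
      exact ⟨by linarith [hx.1], by linarith [hx.2]⟩
  have hint := intervalIntegral.intervalIntegrable_deriv_of_nonneg hcont hder
    (fun x _ => biphi_nonneg a b x)
  rw [intervalIntegral.integral_eq_sub_of_hasDeriv_right hcont
    (fun x hx => (hder x hx).hasDerivWithinAt) hint,
    Fbiv_Gint a b 0 (by simp), Gint_zero]
  ring


lemma bivLaw_swap (ρ : ℝ) (hρ : ρ ^ 2 ≤ 1) : Measure.map Prod.swap (bivLaw ρ) = bivLaw ρ := by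
  have hs : √(1 - ρ ^ 2) ^ 2 = 1 - ρ ^ 2 := Real.sq_sqrt (by linarith)
  have h1 := law_pair ![1, 0] ![ρ, √(1 - ρ ^ 2)] ρ hρ (by simp) (by simp [hs]) (by simp)
  have h2 := law_pair ![ρ, √(1 - ρ ^ 2)] ![1, 0] ρ hρ (by simp [hs]) (by simp) (by simp)
  rw [← h1, Measure.map_map measurable_swap (by fun_prop), h1, ← h2]
  rfl

lemma bivLaw_fst (ρ : ℝ) (s : Set ℝ) (hs : MeasurableSet s) :
    (bivLaw ρ).real (s ×ˢ Set.univ) = (gaussianReal 0 1).real s := by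
  unfold bivLaw
  rw [map_measureReal_apply (by fun_prop) (hs.prod MeasurableSet.univ)]
  have : ((fun z : ℝ × ℝ => (z.1, ρ * z.1 + √(1 - ρ ^ 2) * z.2)) ⁻¹' s ×ˢ Set.univ)
      = s ×ˢ Set.univ := by
    ext z; simp
  rw [this, measureReal_prod_prod]; simp

lemma bivLaw_snd (ρ : ℝ) (hρ : ρ ^ 2 ≤ 1) (s : Set ℝ) (hs : MeasurableSet s) :
    (bivLaw ρ).real (Set.univ ×ˢ s) = (gaussianReal 0 1).real s := by
  rw [← bivLaw_fst ρ s hs]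
  conv_lhs => rw [← bivLaw_swap ρ hρ]
  rw [map_measureReal_apply measurable_swap (MeasurableSet.univ.prod hs), Set.preimage_swap_prod]

lemma real_prod_left (μ : Measure (ℝ × ℝ)) [IsFiniteMeasure μ] {A B C S : Set ℝ}
    (hB : MeasurableSet B) (hS : MeasurableSet S) (hd : Disjoint A B) (hC : A ∪ B = C) :
    μ.real (C ×ˢ S) = μ.real (A ×ˢ S) + μ.real (B ×ˢ S) := by
  rw [← hC, Set.union_prod, measureReal_union (Set.Disjoint.set_prod_left hd _ _) (hB.prod hS)]

lemma real_prod_right (μ : Measure (ℝ × ℝ)) [IsFiniteMeasure μ] {A B C S : Set ℝ}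
    (hB : MeasurableSet B) (hS : MeasurableSet S) (hd : Disjoint A B) (hC : A ∪ B = C) :
    μ.real (S ×ˢ C) = μ.real (S ×ˢ A) + μ.real (S ×ˢ B) := by
  rw [← hC, Set.prod_union, measureReal_union (Set.Disjoint.set_prod_right hd _ _) (hS.prod hB)]

lemma rfun_biphi (q : ℕ → ℝ) (i j : ℕ) (ρ : ℝ) :
    rfun q i j ρ = ∫ r in (0:ℝ)..ρ, biphi (q i) (q j) r := rfl

lemma biphi_symm (a b r : ℝ) : biphi a b r = biphi b a r := by
  unfold biphi
  rw [show a ^ 2 + b ^ 2 - 2 * r * a * b = b ^ 2 + a ^ 2 - 2 * r * b * a by ring]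

lemma armSet_meas (q : ℕ → ℝ) (K : ℕ) (k : Fin K) : MeasurableSet (armSet q K k) := by
  unfold armSet
  split_ifs
  · exact measurableSet_Iic
  · exact measurableSet_Ioi
  · exact measurableSet_Ioc

lemma arm_prob (K : ℕ) (hK : 2 ≤ K) (k : Fin K)
    (q : ℕ → ℝ) (hq : ∀ m : ℕ, 0 < m → m < K → stdGaussianCDF (q m) = (m : ℝ) / K)
    (ρ : ℝ) (h1 : -1 < ρ) (h2 : ρ ≤ 1) :
    (bivLaw ρ).real (armSet q K k ×ˢ armSet q K k) = fkfun q K k ρ + 1 / (K : ℝ) ^ 2 := by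
  have hρ : ρ ^ 2 ≤ 1 := by nlinarith
  have hK0 : (0:ℝ) < K := by positivity
  have hk := k.2
  have F : ∀ i j : ℕ, 0 < i → i < K → 0 < j → j < K →
      (bivLaw ρ).real (Set.Iic (q i) ×ˢ Set.Iic (q j)) = (i : ℝ) / K * (j / K) + rfun q i j ρ := by
    intro i j hi hi' hj hj'
    rw [← hq i hi hi', ← hq j hj hj', rfun_biphi, ← Fbiv_formula _ _ _ h1 h2, Fbiv]
  unfold armSet fkfun
  split_ifs with c1 c2
  · rw [F 1 1 (by omega) (by omega) (by omega) (by omega)]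
    push_cast; field_simp; ring
  · set Q := q (K - 1)
    have m1 := measurableSet_Iic (a := Q)
    have m2 := measurableSet_Ioi (a := Q)
    have d : Disjoint (Set.Iic Q) (Set.Ioi Q) := Set.Iic_disjoint_Ioi le_rfl
    have u : Set.Iic Q ∪ Set.Ioi Q = Set.univ := Set.Iic_union_Ioi
    have e1 := real_prod_left (bivLaw ρ) m2 m2 d u
    have e2 := real_prod_right (bivLaw ρ) m2 m1 d u
    have e3 := bivLaw_fst ρ _ m1
    have e4 := bivLaw_snd ρ hρ _ m2
    have e5 : (gaussianReal 0 1).real (Set.Iic Q) = ((K - 1 : ℕ) : ℝ) / K :=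
      hq (K - 1) (by omega) (by omega)
    have e6 : (gaussianReal 0 1).real (Set.Ioi Q) = 1 - (gaussianReal 0 1).real (Set.Iic Q) := by
      rw [← Set.compl_Iic, probReal_compl_eq_one_sub m1]
    have e7 := F (K - 1) (K - 1) (by omega) (by omega) (by omega) (by omega)
    have hcast : ((K - 1 : ℕ) : ℝ) = K - 1 := by
      rw [Nat.cast_sub (by omega)]; simp
    rw [hcast] at e5 e7
    have : (1:ℝ) - (K - 1) / K - ((K - 1) / K - (K - 1) / K * ((K - 1) / K)) = 1 / K ^ 2 := by
      field_simp; ring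
    change _ = rfun q (K - 1) (K - 1) ρ + _
    linarith
  · set a := q k.val
    set b := q (k.val + 1)
    have hab : a ≤ b := by
      by_contra hlt
      push Not at hlt
      have hm : stdGaussianCDF b ≤ stdGaussianCDF a := by
        unfold stdGaussianCDF
        exact measureReal_mono (Set.Iic_subset_Iic.2 hlt.le)
      rw [hq _ (by omega) (by omega), hq _ (by omega) (by omega)] at hm
      rw [div_le_div_iff_of_pos_right hK0] at hm
      push_cast at hm
      linarith
    have ma := measurableSet_Iic (a := a)
    have mb := measurableSet_Iic (a := b)
    have m2 := measurableSet_Ioc (a := a) (b := b)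
    have d : Disjoint (Set.Iic a) (Set.Ioc a b) := Set.Iic_disjoint_Ioc le_rfl
    have u : Set.Iic a ∪ Set.Ioc a b = Set.Iic b := Set.Iic_union_Ioc_eq_Iic hab
    have e1 := real_prod_left (bivLaw ρ) m2 m2 d u
    have e2 := real_prod_right (bivLaw ρ) m2 ma d u
    have e3 := real_prod_right (bivLaw ρ) m2 mb d u
    have f1 := F k.val k.val (by omega) (by omega) (by omega) (by omega)
    have f2 := F k.val (k.val + 1) (by omega) (by omega) (by omega) (by omega)
    have f3 := F (k.val + 1) k.val (by omega) (by omega) (by omega) (by omega)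
    have f4 := F (k.val + 1) (k.val + 1) (by omega) (by omega) (by omega) (by omega)
    have hsym : rfun q (k.val + 1) k.val ρ = rfun q k.val (k.val + 1) ρ := by
      rw [rfun_biphi, rfun_biphi]; simp only [biphi_symm]
    rw [hsym] at f3
    push_cast at f1 f2 f3 f4
    have : (k.val : ℝ) / K * (k.val / K) - (k.val : ℝ) / K * ((k.val + 1) / K)
      - ((k.val : ℝ) + 1) / K * (k.val / K) + ((k.val : ℝ) + 1) / K * ((k.val + 1) / K)
      = 1 / K ^ 2 := by
      field_simp; ring
    linarith

lemma biphi_le (a b r : ℝ) (hr : |r| ≤ 1 / 2) : |biphi a b r| ≤ 1 := by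
  rw [abs_of_nonneg (biphi_nonneg a b r)]
  unfold biphi
  obtain ⟨hr1, hr2⟩ := abs_le.1 hr
  have hr3 : r ^ 2 ≤ 1 / 4 := by nlinarith
  have hs : 1 / 2 ≤ √(1 - r ^ 2) := by
    apply Real.le_sqrt_of_sq_le; linarith
  have hA : (2 * π * √(1 - r ^ 2))⁻¹ ≤ 1 := by
    apply inv_le_one_of_one_le₀
    nlinarith [Real.pi_gt_three]
  have hB : Real.exp (-((a ^ 2 + b ^ 2 - 2 * r * a * b) / (2 * (1 - r ^ 2)))) ≤ 1 := by
    rw [Real.exp_le_one_iff, neg_nonpos]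
    apply div_nonneg _ (by linarith)
    nlinarith [mul_nonneg (by linarith : (0:ℝ) ≤ 1 - r) (add_nonneg (sq_nonneg a) (sq_nonneg b)),
      mul_nonneg (by linarith : (0:ℝ) ≤ 1 + r) (sq_nonneg (a - b)),
      mul_nonneg (by linarith : (0:ℝ) ≤ 1 - r) (sq_nonneg (a + b))]
  calc _ ≤ 1 * 1 := mul_le_mul hA hB (Real.exp_nonneg _) (by norm_num)
    _ = 1 := by norm_num

lemma rfun_le (q : ℕ → ℝ) (i j : ℕ) (ρ : ℝ) (hρ : |ρ| ≤ 1 / 2) : |rfun q i j ρ| ≤ |ρ| := by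
  rw [rfun_biphi]
  have := intervalIntegral.norm_integral_le_of_norm_le_const (a := 0) (b := ρ) (C := 1)
    (f := biphi (q i) (q j)) ?_
  · simpa using this
  · intro x hx
    apply biphi_le
    obtain ⟨h1, h2⟩ := abs_le.1 hρ
    rw [Set.mem_uIoc] at hx
    rw [abs_le]
    rcases hx with h | h <;> constructor <;> linarith

lemma fkfun_le (q : ℕ → ℝ) (K : ℕ) (k : Fin K) (ρ : ℝ) (hρ : |ρ| ≤ 1 / 2) :
    |fkfun q K k ρ| ≤ 4 * |ρ| := by
  have h := fun i j => rfun_le q i j ρ hρ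
  have h0 := abs_nonneg ρ
  unfold fkfun
  split_ifs
  · linarith [h 1 1]
  · linarith [h (K - 1) (K - 1)]
  · have a1 := abs_le.1 (h k.val k.val)
    have a2 := abs_le.1 (h (k.val + 1) (k.val + 1))
    have a3 := abs_le.1 (h k.val (k.val + 1))
    rw [abs_le]
    constructor <;> linarith [a1.1, a1.2, a2.1, a2.2, a3.1, a3.2]


lemma opNorm_nonneg {m : ℕ} (B : Matrix (Fin m) (Fin m) ℝ) : 0 ≤ opNorm B := norm_nonneg _

lemma entry_le {m : ℕ} (B : Matrix (Fin m) (Fin m) ℝ) (i j : Fin m) : |B i j| ≤ opNorm B := by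
  have h := (Matrix.toEuclideanCLM (𝕜 := ℝ) B).le_opNorm (EuclideanSpace.single j 1)
  have h2 := PiLp.norm_apply_le ((Matrix.toEuclideanCLM (𝕜 := ℝ) B) (EuclideanSpace.single j 1)) i
  have h3 : ((Matrix.toEuclideanCLM (𝕜 := ℝ) B) (EuclideanSpace.single j 1)) i = B i j := by
    simp [Matrix.ofLp_toEuclideanCLM]
  rw [h3] at h2
  simp only [EuclideanSpace.norm_single, norm_one, mul_one] at h
  exact h2.trans h

lemma opNorm_mul_self {m : ℕ} (B : Matrix (Fin m) (Fin m) ℝ) : opNorm (B * B) ≤ opNorm B ^ 2 := by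
  unfold opNorm
  rw [map_mul, sq]
  exact norm_mul_le _ _

lemma pgd_facts {n d : ℕ} (X : Matrix (Fin n) (Fin d) ℝ) (hX : ∀ i, ∑ j, X i j ^ 2 = 1)
    (η c : ℝ) (i j : Fin n) :
    pgd X η c i i = 1 ∧ (i ≠ j → |pgd X η c i j| ≤
      2 * (|η * c| * opNorm (X * Xᵀ - 1)) + (|η * c| * opNorm (X * Xᵀ - 1)) ^ 2) := by
  set B := X * Xᵀ - 1 with hB
  set e := η * c
  set U : Matrix (Fin n) (Fin n) ℝ := 1 - e • B with hU
  have hBt : ∀ i j, B i j = B j i := by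
    intro i j
    simp only [hB, Matrix.sub_apply, Matrix.mul_apply, Matrix.transpose_apply, Matrix.one_apply,
      eq_comm (a := i)]
    congr 1
    exact Finset.sum_congr rfl fun l _ => mul_comm _ _
  have hB0 : ∀ i, B i i = 0 := by
    intro i
    simp only [hB, Matrix.sub_apply, Matrix.mul_apply, Matrix.transpose_apply, Matrix.one_apply_eq,
      ← sq, hX, sub_self]
  have hUt : ∀ i j, U i j = U j i := by
    intro i j
    simp only [hU, Matrix.sub_apply, Matrix.smul_apply, hBt i j, Matrix.one_apply, eq_comm (a := i)]
  have hUd : ∀ i, U i i = 1 := by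
    intro i; simp [hU, hB0]
  have hge : ∀ i, 1 ≤ ∑ l, U i l ^ 2 := by
    intro i
    calc (1:ℝ) = U i i ^ 2 := by rw [hUd]; norm_num
      _ ≤ _ := Finset.single_le_sum (f := fun l => U i l ^ 2) (fun l _ => sq_nonneg _)
        (Finset.mem_univ i)
  have hp : ∀ i j, pgd X η c i j = (U * U) i j / (√(∑ l, U i l ^ 2) * √(∑ l, U j l ^ 2)) :=
    fun i j => rfl
  constructor
  · rw [hp, Real.mul_self_sqrt (by linarith [hge i])]
    have : (U * U) i i = ∑ l, U i l ^ 2 := by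
      rw [Matrix.mul_apply]
      exact Finset.sum_congr rfl fun l _ => by rw [hUt l i, sq]
    rw [this, div_self (by linarith [hge i])]
  · intro hij
    have hsq : ∀ i, 1 ≤ √(∑ l, U i l ^ 2) := fun i => Real.one_le_sqrt.2 (hge i)
    have hUU : (U * U) i j = -(2 * (e * B i j)) + e ^ 2 * (B * B) i j := by
      have : U * U = 1 - (2 * e) • B + (e ^ 2) • (B * B) := by
        rw [hU]
        simp only [sub_mul, mul_sub, one_mul, mul_one, Matrix.smul_mul, Matrix.mul_smul, smul_smul,
          two_mul, add_smul, sq]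
        abel
      rw [this]
      simp [Matrix.one_apply_ne hij]
      ring
    have hb := opNorm_nonneg B
    have h1 : |(U * U) i j| ≤ 2 * (|e| * opNorm B) + (|e| * opNorm B) ^ 2 := by
      rw [hUU]
      refine (abs_add_le _ _).trans ?_
      rw [abs_neg, abs_mul 2, abs_mul e, abs_mul (e ^ 2), abs_two, mul_pow |e|, sq_abs, abs_of_nonneg (sq_nonneg e)]
      have := entry_le B i j
      have := (entry_le (B * B) i j).trans (opNorm_mul_self B)
      gcongr
    rw [hp, abs_div]
    have hden : 1 ≤ √(∑ l, U i l ^ 2) * √(∑ l, U j l ^ 2) :=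
      one_le_mul_of_one_le_of_one_le (hsq i) (hsq j)
    rw [abs_of_pos (by linarith : 0 < √(∑ l, U i l ^ 2) * √(∑ l, U j l ^ 2))]
    exact (div_le_self (abs_nonneg _) hden).trans h1

lemma pair_prob (K : ℕ) (hK : 2 ≤ K) (k : Fin K)
    (q : ℕ → ℝ) (hq : ∀ m : ℕ, 0 < m → m < K → stdGaussianCDF (q m) = (m : ℝ) / K)
    {Ω : Type} [MeasureSpace Ω]
    {n : ℕ} (A S : Matrix (Fin n) (Fin n) ℝ) (hA : A * Aᵀ = S)
    (T : Ω → Fin n → ℝ) (hT : Measurable T)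
    (hlaw : Measure.map T volume =
      Measure.map (fun z => A *ᵥ z) (Measure.pi fun _ : Fin n => gaussianReal 0 1))
    (i j : Fin n) (hi : S i i = 1) (hj : S j j = 1) (h1 : -1 < S i j) (h2 : S i j ≤ 1) :
    (volume : Measure Ω).real {ω | T ω i ∈ armSet q K k ∧ T ω j ∈ armSet q K k} =
      fkfun q K k (S i j) + 1 / (K : ℝ) ^ 2 := by
  have hm := armSet_meas q K k
  have hAe : ∀ i j, S i j = ∑ l, A i l * A j l := by
    intro i j; rw [← hA]; simp [Matrix.mul_apply]
  have hl := law_pair (A i) (A j) (S i j) (by nlinarith)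
    (by rw [← hi, hAe]; exact Finset.sum_congr rfl fun l _ => sq _)
    (by rw [← hj, hAe]; exact Finset.sum_congr rfl fun l _ => sq _) (hAe i j).symm
  rw [← arm_prob K hK k q hq _ h1 h2, ← hl]
  have hmap : Measure.map (fun ω => (T ω i, T ω j)) (volume : Measure Ω) =
      Measure.map (fun z : Fin n → ℝ => (∑ l, A i l * z l, ∑ l, A j l * z l))
      (Measure.pi fun _ : Fin n => gaussianReal 0 1) := by
    have := congrArg (Measure.map (fun t : Fin n → ℝ => (t i, t j))) hlaw
    rw [Measure.map_map (by fun_prop) hT, Measure.map_map (by fun_prop)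
      (by unfold Matrix.mulVec dotProduct; fun_prop)] at this
    exact this
  rw [← hmap, map_measureReal_apply (by fun_prop) (hm.prod hm)]
  rfl

lemma fk_one (K : ℕ) (hK : 2 ≤ K) (k : Fin K)
    (q : ℕ → ℝ) (hq : ∀ m : ℕ, 0 < m → m < K → stdGaussianCDF (q m) = (m : ℝ) / K) :
    fkfun q K k 1 + 1 / (K : ℝ) ^ 2 = 1 / K := by
  have hm := armSet_meas q K k
  have h0 := arm_prob K hK k q hq 0 (by norm_num) (by norm_num)
  have h1 := arm_prob K hK k q hq 1 (by norm_num) (by norm_num)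
  have hf0 : fkfun q K k 0 = 0 := by
    have := fkfun_le q K k 0 (by norm_num)
    simpa using this
  have e0 : bivLaw 0 = (gaussianReal 0 1).prod (gaussianReal 0 1) := by
    unfold bivLaw; simp
  have e1 : (bivLaw 1).real (armSet q K k ×ˢ armSet q K k) = (gaussianReal 0 1).real (armSet q K k) := by
    rw [← bivLaw_fst 1 _ hm]
    unfold bivLaw
    rw [map_measureReal_apply (by fun_prop) (hm.prod hm),
      map_measureReal_apply (by fun_prop) (hm.prod MeasurableSet.univ)]
    congr 1
    ext z; simp
  rw [e0, measureReal_prod_prod, hf0, zero_add] at h0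
  rw [← h1, e1]
  have hnn : 0 ≤ (gaussianReal 0 1).real (armSet q K k) := measureReal_nonneg
  have hK0 : (0:ℝ) ≤ 1 / K := by positivity
  apply (mul_self_inj hnn hK0).1
  rw [h0]; ring


lemma abstract_var {Ω : Type} [MeasureSpace Ω] [IsProbabilityMeasure (volume : Measure Ω)]
    (n : ℕ) (hn : 0 < n) (K : ℝ) (hK : 2 ≤ K) (I : Fin n → Ω → ℝ) (hIm : ∀ i, Measurable (I i))
    (hI01 : ∀ i ω, I i ω = 0 ∨ I i ω = 1) (f : Fin n → Fin n → ℝ)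
    (hE : ∀ i j, ∫ ω, I i ω * I j ω = f i j + 1 / K ^ 2)
    (hd : ∀ i, f i i + 1 / K ^ 2 = 1 / K) (ε : ℝ) (hε0 : 0 ≤ ε) (hε : ε ≤ 1 / (2 * K ^ 2))
    (hf : ∀ i j, i ≠ j → |f i j| ≤ ε) (y : Fin n → ℝ) (M : ℝ) (hy : ∀ i, |y i| ≤ M)
    (V : Ω → ℝ) (hV : ∀ ω, V ω = K ^ 2 / n * ∑ i, ∑ j,
      y i * y j * f i j / (f i j + 1 / K ^ 2) * (I i ω * I j ω)) :
    (∀ i j, 0 < f i j + 1 / K ^ 2) ∧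
    (∫ ω, V ω = K ^ 2 / n * ∑ i, ∑ j, y i * y j * f i j) ∧
    ∫ ω, (V ω - ∫ ω', V ω') ^ 2 ≤
      2 * (K ^ 4 * M ^ 4) * (1 / n + ε) + 2 * (2 * K ^ 4 * M ^ 2 * (n * ε)) ^ 2 := by
  have hK0 : 0 < K := by linarith
  have hM : 0 ≤ M := (abs_nonneg _).trans (hy ⟨0, hn⟩)
  have hn0 : (0:ℝ) < n := by exact_mod_cast hn
  have hppos' : ∀ i j, i ≠ j → 1 / (2 * K ^ 2) ≤ f i j + 1 / K ^ 2 := by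
    intro i j h
    have h1 := (abs_le.1 (hf i j h)).1
    have h2 : 1 / K ^ 2 = 1 / (2 * K ^ 2) + 1 / (2 * K ^ 2) := by field_simp; norm_num
    linarith
  have hppos : ∀ i j, 0 < f i j + 1 / K ^ 2 := by
    intro i j
    by_cases h : i = j
    · subst h; rw [hd]; positivity
    · exact lt_of_lt_of_le (by positivity) (hppos' i j h)
  have hIb : ∀ i ω, |I i ω| ≤ 1 := by
    intro i ω; rcases hI01 i ω with h | h <;> simp [h]
  have hbint : ∀ (g : Ω → ℝ) (C : ℝ), Measurable g → (∀ ω, |g ω| ≤ C) → Integrable g := by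
    intro g C hg hC
    exact Integrable.of_bound hg.aestronglyMeasurable C (Eventually.of_forall hC)
  have hIint : ∀ i, Integrable (I i) := fun i => hbint _ 1 (hIm i) (hIb i)
  have hIIb : ∀ i j ω, |I i ω * I j ω| ≤ 1 := by
    intro i j ω; rw [abs_mul]; exact mul_le_one₀ (hIb i ω) (abs_nonneg _) (hIb j ω)
  have hIIint : ∀ i j, Integrable (fun ω => I i ω * I j ω) := fun i j =>
    hbint _ 1 ((hIm i).mul (hIm j)) (hIIb i j)
  have hEI : ∀ i, ∫ ω, I i ω = 1 / K := by
    intro i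
    rw [← hd i, ← hE i i]
    congr 1; ext ω
    rcases hI01 i ω with h | h <;> simp [h]
  set c : Fin n → Fin n → ℝ := fun i j => y i * y j * f i j / (f i j + 1 / K ^ 2) with hc
  have hVm : Measurable V := by
    have : V = fun ω => K ^ 2 / n * ∑ i, ∑ j, c i j * (I i ω * I j ω) := funext hV
    rw [this]
    fun_prop
  have hEV : ∫ ω, V ω = K ^ 2 / n * ∑ i, ∑ j, y i * y j * f i j := by
    simp only [hV]
    rw [integral_const_mul, integral_finsetSum]
    · congr 1
      refine Finset.sum_congr rfl fun i _ => ?_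
      rw [integral_finsetSum]
      · refine Finset.sum_congr rfl fun j _ => ?_
        rw [integral_const_mul, hE, div_mul_cancel₀ _ (hppos i j).ne']
      · exact fun j _ => (hIIint i j).const_mul _
    · exact fun i _ => integrable_finsetSum _ fun j _ => (hIIint i j).const_mul _
  refine ⟨hppos, hEV, ?_⟩
  have hyy : ∀ i j, |y i * y j| ≤ M ^ 2 := by
    intro i j; rw [abs_mul, sq]; exact mul_le_mul (hy i) (hy j) (abs_nonneg _) hM
  have hcd : ∀ i, |c i i| ≤ M ^ 2 := by
    intro i
    have hfi : f i i = 1 / K - 1 / K ^ 2 := by linarith [hd i]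
    have : c i i = y i * y i * (1 - 1 / K) := by
      simp only [hc, hd]; rw [hfi]; field_simp
    rw [this, abs_mul]
    have h1 : 1 / K ≤ 1 := by rw [div_le_one hK0]; linarith
    have h2 : 0 < 1 / K := by positivity
    have : |1 - 1 / K| ≤ 1 := by rw [abs_le]; constructor <;> linarith
    exact (mul_le_of_le_one_right (abs_nonneg _) this).trans (hyy i i)
  have hco : ∀ i j, i ≠ j → |c i j| ≤ M ^ 2 * ε * (2 * K ^ 2) := by
    intro i j hij
    simp only [hc]
    rw [abs_div, abs_of_pos (hppos i j), abs_mul, div_le_iff₀ (hppos i j)]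
    have h1 := hppos' i j hij
    have h2 : 1 ≤ (2 * K ^ 2) * (f i j + 1 / K ^ 2) := by
      rw [div_le_iff₀ (by positivity)] at h1; linarith
    have h3 : |y i * y j| * |f i j| ≤ M ^ 2 * ε :=
      mul_le_mul (hyy i j) (hf i j hij) (abs_nonneg _) (by positivity)
    have h4 : 0 ≤ M ^ 2 * ε := by positivity
    nlinarith
  set S : Ω → ℝ := fun ω => ∑ i, c i i * (I i ω - 1 / K) with hS
  set R : Ω → ℝ := fun ω => ∑ i, ∑ j, if i = j then 0 else c i j * (I i ω * I j ω) with hR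
  set m : ℝ := K ^ 2 / n * ∑ i, c i i * (1 / K) with hm
  have hdec : ∀ ω, V ω - m = K ^ 2 / n * S ω + K ^ 2 / n * R ω := by
    intro ω
    have : ∑ i, ∑ j, c i j * (I i ω * I j ω) = ∑ i, c i i * I i ω + R ω := by
      simp only [hR]
      rw [← Finset.sum_add_distrib]
      refine Finset.sum_congr rfl fun i _ => ?_
      have : ∀ j, c i j * (I i ω * I j ω) = (if i = j then c i i * I i ω else 0) +
          (if i = j then 0 else c i j * (I i ω * I j ω)) := by
        intro j
        by_cases h : i = j
        · subst h; rcases hI01 i ω with h | h <;> simp [h]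
        · simp [h]
      rw [Finset.sum_congr rfl fun j _ => this j, Finset.sum_add_distrib]
      simp
    rw [hV, hm]
    change K ^ 2 / n * ∑ i, ∑ j, c i j * (I i ω * I j ω) - _ = _
    rw [this]
    simp only [hS, mul_sub, Finset.sum_sub_distrib]
    ring
  have hRb : ∀ ω, |K ^ 2 / n * R ω| ≤ 2 * K ^ 4 * M ^ 2 * (n * ε) := by
    intro ω
    have h1 : |R ω| ≤ ∑ i : Fin n, ∑ j : Fin n, M ^ 2 * ε * (2 * K ^ 2) := by
      refine (Finset.abs_sum_le_sum_abs _ _).trans (Finset.sum_le_sum fun i _ => ?_)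
      refine (Finset.abs_sum_le_sum_abs _ _).trans (Finset.sum_le_sum fun j _ => ?_)
      split_ifs with h
      · rw [abs_zero]; positivity
      · rw [abs_mul]
        exact (mul_le_of_le_one_right (abs_nonneg _) (hIIb i j ω)).trans (hco i j h)
    simp only [Finset.sum_const, Finset.card_univ, Fintype.card_fin, nsmul_eq_mul] at h1
    rw [abs_mul, abs_of_pos (by positivity : 0 < K ^ 2 / (n:ℝ))]
    calc K ^ 2 / n * |R ω| ≤ K ^ 2 / n * (n * (n * (M ^ 2 * ε * (2 * K ^ 2)))) := by gcongr
      _ = _ := by field_simp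
  have hSm : Measurable S := by simp only [hS]; fun_prop
  have hSb : ∀ ω, |S ω| ≤ n * (M ^ 2 * 2) := by
    intro ω
    have h1 : |S ω| ≤ ∑ i : Fin n, M ^ 2 * 2 := by
      refine (Finset.abs_sum_le_sum_abs _ _).trans (Finset.sum_le_sum fun i _ => ?_)
      rw [abs_mul]
      refine mul_le_mul (hcd i) ?_ (abs_nonneg _) (by positivity)
      refine (abs_sub _ _).trans ?_
      have h1 : 1 / K ≤ 1 := by rw [div_le_one hK0]; linarith
      have h2 : 0 < 1 / K := by positivity
      rw [abs_of_pos h2]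
      linarith [hIb i ω]
    simpa using h1
  have hS2int : Integrable (fun ω => S ω ^ 2) := by
    refine hbint _ ((n * (M ^ 2 * 2)) ^ 2) (hSm.pow_const 2) fun ω => ?_
    rw [abs_pow]; exact pow_le_pow_left₀ (abs_nonneg _) (hSb ω) 2
  have hES : ∫ ω, S ω ^ 2 ≤ M ^ 4 * (n + n ^ 2 * ε) := by
    have hexp : ∀ ω, S ω ^ 2 = ∑ i, ∑ j, c i i * c j j * (I i ω * I j ω - 1 / K * I i ω
        - 1 / K * I j ω + 1 / K ^ 2) := by
      intro ω
      simp only [hS]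
      rw [sq, Finset.sum_mul_sum]
      refine Finset.sum_congr rfl fun i _ => Finset.sum_congr rfl fun j _ => ?_
      ring
    have hint : ∀ i j, Integrable (fun ω => I i ω * I j ω - 1 / K * I i ω
        - 1 / K * I j ω + 1 / K ^ 2) := fun i j =>
      (((hIIint i j).sub ((hIint i).const_mul _)).sub ((hIint j).const_mul _)).add
        (integrable_const _)
    have hval : ∀ i j, ∫ ω, (I i ω * I j ω - 1 / K * I i ω
        - 1 / K * I j ω + 1 / K ^ 2) = f i j := by
      intro i j
      have a1 : Integrable (fun ω => I i ω * I j ω - 1 / K * I i ω) :=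
        (hIIint i j).sub ((hIint i).const_mul _)
      have a2 : Integrable (fun ω => I i ω * I j ω - 1 / K * I i ω - 1 / K * I j ω) :=
        a1.sub ((hIint j).const_mul _)
      rw [integral_add a2 (integrable_const _), integral_sub a1
        ((hIint j).const_mul _), integral_sub (hIIint i j) ((hIint i).const_mul _),
        integral_const_mul, integral_const_mul, hEI, hEI, hE]
      simp
      ring
    simp only [hexp]
    rw [integral_finsetSum _ fun i _ => integrable_finsetSum _ fun j _ => (hint i j).const_mul _]
    have : ∀ i, ∫ ω, ∑ j, c i i * c j j * (I i ω * I j ω - 1 / K * I i ω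
        - 1 / K * I j ω + 1 / K ^ 2) = ∑ j, c i i * c j j * f i j := by
      intro i
      rw [integral_finsetSum _ fun j _ => (hint i j).const_mul _]
      refine Finset.sum_congr rfl fun j _ => ?_
      rw [integral_const_mul, hval]
    simp only [this]
    have hb : ∀ i j, c i i * c j j * f i j ≤ (if i = j then M ^ 4 else 0) + M ^ 4 * ε := by
      intro i j
      have h1 : |c i i * c j j| ≤ M ^ 4 := by
        rw [abs_mul, show M ^ 4 = M ^ 2 * M ^ 2 by ring]
        exact mul_le_mul (hcd i) (hcd j) (abs_nonneg _) (by positivity)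
      refine (le_abs_self _).trans ?_
      rw [abs_mul]
      by_cases h : i = j
      · subst h
        rw [if_pos rfl]
        have hfi : f i i = 1 / K - 1 / K ^ 2 := by linarith [hd i]
        have h1K : 1 / K ≤ 1 := by rw [div_le_one hK0]; linarith
        have h2K : 0 < 1 / K ^ 2 := by positivity
        have h3K := hppos i i
        have : |f i i| ≤ 1 := by
          rw [abs_le]; constructor
          · have : 1 / K ^ 2 ≤ 1 := by rw [div_le_one (by positivity)]; nlinarith
            linarith
          · linarith
        have h4 : 0 ≤ M ^ 4 * ε := by positivity
        have := (mul_le_of_le_one_right (abs_nonneg (c i i * c i i)) this).trans h1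
        linarith
      · rw [if_neg h, zero_add]
        exact mul_le_mul h1 (hf i j h) (abs_nonneg _) (by positivity)
    calc ∑ i, ∑ j, c i i * c j j * f i j
        ≤ ∑ i : Fin n, ∑ j : Fin n, ((if i = j then M ^ 4 else 0) + M ^ 4 * ε) :=
          Finset.sum_le_sum fun i _ => Finset.sum_le_sum fun j _ => hb i j
      _ = _ := by
          simp [Finset.sum_add_distrib]
          ring
  have hVb : ∀ ω, |V ω - m| ≤ K ^ 2 / n * (n * (M ^ 2 * 2)) + 2 * K ^ 4 * M ^ 2 * (n * ε) := by
    intro ω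
    rw [hdec]
    refine (abs_add_le _ _).trans (add_le_add ?_ (hRb ω))
    rw [abs_mul, abs_of_pos (by positivity : 0 < K ^ 2 / (n:ℝ))]
    exact mul_le_mul_of_nonneg_left (hSb ω) (by positivity)
  have hWm : Measurable fun ω => V ω - m := hVm.sub_const m
  have hWint := hbint _ _ hWm hVb
  have hVint : Integrable V := by
    have := hWint.add (integrable_const m)
    refine this.congr (Eventually.of_forall fun ω => ?_)
    simp
  have hW2int : Integrable (fun ω => (V ω - m) ^ 2) := by
    refine hbint _ ((K ^ 2 / n * (n * (M ^ 2 * 2)) + 2 * K ^ 4 * M ^ 2 * (n * ε)) ^ 2)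
      (hWm.pow_const 2) fun ω => ?_
    rw [abs_pow]; exact pow_le_pow_left₀ (abs_nonneg _) (hVb ω) 2
  have step1 : ∫ ω, (V ω - ∫ ω', V ω') ^ 2 ≤ ∫ ω, (V ω - m) ^ 2 := by
    set e := ∫ ω', V ω' with he
    have hx : ∀ ω, (V ω - e) ^ 2 = (V ω - m) ^ 2 - (2 * (e - m)) * (V ω - m) + (e - m) ^ 2 := by
      intro ω; ring
    simp only [hx]
    have a1 : Integrable (fun ω => (V ω - m) ^ 2 - (2 * (e - m)) * (V ω - m)) :=
      hW2int.sub (hWint.const_mul _)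
    rw [integral_add a1 (integrable_const _),
      integral_sub hW2int (hWint.const_mul _), integral_const_mul,
      integral_sub hVint (integrable_const _), ← he]
    simp
    nlinarith [sq_nonneg (e - m)]
  refine step1.trans ?_
  have step2 : ∫ ω, (V ω - m) ^ 2 ≤ ∫ ω, (2 * (K ^ 2 / n) ^ 2 * S ω ^ 2 +
      2 * (2 * K ^ 4 * M ^ 2 * (n * ε)) ^ 2) := by
    refine integral_mono hW2int ((hS2int.const_mul _).add (integrable_const _)) fun ω => ?_
    have h1 : (K ^ 2 / n * R ω) ^ 2 ≤ (2 * K ^ 4 * M ^ 2 * (n * ε)) ^ 2 := by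
      rw [← sq_abs]; exact pow_le_pow_left₀ (abs_nonneg _) (hRb ω) 2
    simp only [hdec ω]
    nlinarith [sq_nonneg (K ^ 2 / n * S ω - K ^ 2 / n * R ω)]
  refine step2.trans ?_
  rw [integral_add (hS2int.const_mul _) (integrable_const _), integral_const_mul]
  simp only [integral_const, probReal_univ, smul_eq_mul, one_mul]
  refine add_le_add ?_ le_rfl
  calc 2 * (K ^ 2 / n) ^ 2 * ∫ ω, S ω ^ 2 ≤ 2 * (K ^ 2 / n) ^ 2 * (M ^ 4 * (n + n ^ 2 * ε)) := by
        gcongr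
    _ = _ := by field_simp


lemma limits_aux (b : ℕ → ℝ) (hb0 : ∀ n, 0 ≤ b n) (c : ℝ) (h1 : Tendsto b atTop (𝓝 0))
    (h2 : Tendsto (fun n : ℕ => (n : ℝ) ^ 2 * b n ^ 2) atTop (𝓝 0)) :
    Tendsto (fun n => 4 * (2 * (|c| * b n) + (|c| * b n) ^ 2)) atTop (𝓝 0) ∧
    Tendsto (fun n : ℕ => (n : ℝ) * (4 * (2 * (|c| * b n) + (|c| * b n) ^ 2))) atTop (𝓝 0) := by
  have h3 : Tendsto (fun n : ℕ => (n : ℝ) * b n) atTop (𝓝 0) := by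
    have := (Real.continuous_sqrt.tendsto 0).comp h2
    rw [Real.sqrt_zero] at this
    refine this.congr fun n => ?_
    simp only [Function.comp]
    rw [← mul_pow, Real.sqrt_sq (mul_nonneg (Nat.cast_nonneg n) (hb0 n))]
  constructor
  · have : Tendsto (fun n => 4 * (2 * (|c| * b n) + (|c| * b n) ^ 2)) atTop
        (𝓝 (4 * (2 * (|c| * 0) + (|c| * 0) ^ 2))) :=
      (((h1.const_mul _).const_mul _).add ((h1.const_mul _).pow 2)).const_mul _
    simpa using this
  · have : Tendsto (fun n : ℕ => 8 * |c| * ((n : ℝ) * b n) + 4 * |c| ^ 2 * (((n : ℝ) * b n) * b n))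
        atTop (𝓝 (8 * |c| * 0 + 4 * |c| ^ 2 * (0 * 0))) :=
      (h3.const_mul _).add ((h3.mul h1).const_mul _)
    simp only [mul_zero, add_zero] at this
    refine this.congr fun n => ?_
    ring

/-- **Consistency of the Horvitz–Thompson variance estimator.**
Under unit-norm covariate rows, uniformly bounded arm-`k` potential outcomes,
`η_n ‖XXᵀ − I‖_op → 0` and `n² η_n² ‖XXᵀ − I‖_op² → 0`, the variance estimator
`V̂_η = (K²/n) Σ_{i,j} Y_i(D_i) Y_j(D_j) f_k(Σ_{η,ij}) 1{D_i = k, D_j = k}/P(D_i=k, D_j=k)`,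
with `P(D_i=k, D_j=k) = f_k(Σ_{η,ij}) + 1/K²`, is well-defined for large `n` (all denominators
strictly positive), unbiased: `E[V̂_η] = V(Σ_η) = (K²/n) Y(k)ᵀ f_k(Σ_η) Y(k)`, and
`Var(V̂_η) → 0`. -/
theorem variance_estimator_consistency
    (K : ℕ) (hK : 2 ≤ K) (k : Fin K)
    (q : ℕ → ℝ) (hq : ∀ m : ℕ, 0 < m → m < K → stdGaussianCDF (q m) = (m : ℝ) / K)
    (Ω : ℕ → Type) [∀ nn, MeasureSpace (Ω nn)]
    [∀ nn, IsProbabilityMeasure (volume : Measure (Ω nn))]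
    (d : ℕ → ℕ) (X : ∀ nn : ℕ, Matrix (Fin nn) (Fin (d nn)) ℝ)
    (hX : ∀ nn (i : Fin nn), ∑ j, X nn i j ^ 2 = 1)
    (Yf : ∀ nn : ℕ, Fin nn → Fin K → ℝ)
    (M : ℝ) (hM : ∀ nn (i : Fin nn), |Yf nn i k| ≤ M)
    (η : ℕ → ℝ) (hη : ∀ nn, 0 < η nn)
    (hηop : Tendsto (fun nn => η nn * opNorm (X nn * (X nn)ᵀ - 1)) atTop (𝓝 0))
    (hηop2 : Tendsto (fun nn : ℕ =>
      (nn : ℝ) ^ 2 * η nn ^ 2 * opNorm (X nn * (X nn)ᵀ - 1) ^ 2) atTop (𝓝 0))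
    (A : ∀ nn : ℕ, Matrix (Fin nn) (Fin nn) ℝ)
    (hA : ∀ nn, A nn * (A nn)ᵀ = pgd (X nn) (η nn) (deriv (fkfun q K k) 0))
    (T : ∀ nn : ℕ, Ω nn → Fin nn → ℝ) (hTmeas : ∀ nn, Measurable (T nn))
    (hTlaw : ∀ nn, Measure.map (T nn) volume =
      Measure.map (fun z => A nn *ᵥ z) (Measure.pi fun _ : Fin nn => gaussianReal 0 1))
    (D : ∀ nn : ℕ, Ω nn → Fin nn → Fin K)
    (hD : ∀ nn ω i (kk : Fin K), D nn ω i = kk ↔ T nn ω i ∈ armSet q K kk)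
    (Vhat : ∀ nn : ℕ, Ω nn → ℝ)
    (hVhat : ∀ nn ω, Vhat nn ω = (K : ℝ) ^ 2 / nn * ∑ i, ∑ j,
      Yf nn i (D nn ω i) * Yf nn j (D nn ω j) *
        fkfun q K k (pgd (X nn) (η nn) (deriv (fkfun q K k) 0) i j) *
        (if D nn ω i = k ∧ D nn ω j = k then (1 : ℝ) else 0) /
        (fkfun q K k (pgd (X nn) (η nn) (deriv (fkfun q K k) 0) i j) + 1 / (K : ℝ) ^ 2)) :
    (∀ᶠ nn in atTop, ∀ i j : Fin nn,
      0 < fkfun q K k (pgd (X nn) (η nn) (deriv (fkfun q K k) 0) i j) + 1 / (K : ℝ) ^ 2) ∧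
    (∀ᶠ nn in atTop,
      (∫ ω, Vhat nn ω) = (K : ℝ) ^ 2 / nn *
        ((fun i => Yf nn i k) ⬝ᵥ
          ((Matrix.of fun i j =>
            fkfun q K k (pgd (X nn) (η nn) (deriv (fkfun q K k) 0) i j)) *ᵥ
            fun i => Yf nn i k))) ∧
    Tendsto (fun nn => ∫ ω, (Vhat nn ω - ∫ ω', Vhat nn ω') ^ 2) atTop (𝓝 0) := by
  set c := deriv (fkfun q K k) 0 with hc
  set b : ℕ → ℝ := fun nn => η nn * opNorm (X nn * (X nn)ᵀ - 1) with hb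
  have hb0 : ∀ nn, 0 ≤ b nn := fun nn => mul_nonneg (hη nn).le (opNorm_nonneg _)
  obtain ⟨L1, L2⟩ := limits_aux b hb0 c hηop
    (hηop2.congr fun nn => by simp only [hb]; ring)
  set ε : ℕ → ℝ := fun nn => 4 * (2 * (|c| * b nn) + (|c| * b nn) ^ 2) with hε
  have hε0 : ∀ nn, 0 ≤ ε nn := fun nn => by
    have := hb0 nn
    simp only [hε]; positivity
  have hKR : (2 : ℝ) ≤ K := by exact_mod_cast hK
  have hK0 : (0 : ℝ) < K := by linarith
  have key : ∀ᶠ nn : ℕ in atTop,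
      (∀ i j : Fin nn, 0 < fkfun q K k (pgd (X nn) (η nn) c i j) + 1 / (K : ℝ) ^ 2) ∧
      ((∫ ω, Vhat nn ω) = (K : ℝ) ^ 2 / nn * ∑ i, ∑ j, Yf nn i k * Yf nn j k *
        fkfun q K k (pgd (X nn) (η nn) c i j)) ∧
      ∫ ω, (Vhat nn ω - ∫ ω', Vhat nn ω') ^ 2 ≤ 2 * ((K : ℝ) ^ 4 * M ^ 4) * (1 / nn + ε nn) +
        2 * (2 * (K : ℝ) ^ 4 * M ^ 2 * (nn * ε nn)) ^ 2 := by
    have ev1 : ∀ᶠ nn in atTop, ε nn < 1 / (2 * (K : ℝ) ^ 2) :=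
      L1.eventually_lt_const (by positivity)
    filter_upwards [ev1, eventually_gt_atTop 0] with nn h1 hn
    have hsmall : 1 / (2 * (K : ℝ) ^ 2) ≤ 1 := by
      rw [div_le_one (by positivity)]; nlinarith
    have hoff : ∀ i j : Fin nn, i ≠ j → |pgd (X nn) (η nn) c i j| ≤ ε nn / 4 := by
      intro i j hij
      refine ((pgd_facts (X nn) (hX nn) (η nn) c i j).2 hij).trans (le_of_eq ?_)
      simp only [hε, hb]
      rw [abs_mul (η nn), abs_of_pos (hη nn)]
      ring
    have hdiag : ∀ i : Fin nn, pgd (X nn) (η nn) c i i = 1 :=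
      fun i => (pgd_facts (X nn) (hX nn) (η nn) c i i).1
    have hrange : ∀ i j : Fin nn, -1 < pgd (X nn) (η nn) c i j ∧ pgd (X nn) (η nn) c i j ≤ 1 := by
      intro i j
      by_cases h : i = j
      · subst h; rw [hdiag]; norm_num
      · have := abs_le.1 (hoff i j h)
        constructor <;> linarith
    have hset : ∀ i : Fin nn, MeasurableSet {ω | D nn ω i = k} := by
      intro i
      have : {ω | D nn ω i = k} = (fun ω => T nn ω i) ⁻¹' armSet q K k := by
        ext ω; exact hD nn ω i k
      rw [this]
      exact ((measurable_pi_apply i).comp (hTmeas nn)) (armSet_meas q K k)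
    refine abstract_var nn hn K hKR (fun i ω => if D nn ω i = k then 1 else 0)
      (fun i => Measurable.ite (hset i) measurable_const measurable_const)
      (fun i ω => by by_cases h : D nn ω i = k <;> simp [h])
      (fun i j => fkfun q K k (pgd (X nn) (η nn) c i j)) ?_ ?_ (ε nn) (hε0 nn) h1.le ?_
      (fun i => Yf nn i k) M (hM nn) (Vhat nn) ?_
    · intro i j
      rw [← pair_prob K hK k q hq (A nn) _ (hA nn) (T nn) (hTmeas nn) (hTlaw nn) i j (hdiag i)
        (hdiag j) (hrange i j).1 (hrange i j).2]
      have hs : {ω | T nn ω i ∈ armSet q K k ∧ T nn ω j ∈ armSet q K k} =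
          {ω | D nn ω i = k} ∩ {ω | D nn ω j = k} := by
        ext ω; simp only [Set.mem_inter_iff, Set.mem_ofPred_eq, hD]
      rw [hs, ← integral_indicator_one ((hset i).inter (hset j))]
      congr 1
      ext ω
      by_cases h : D nn ω i = k <;> by_cases h' : D nn ω j = k <;>
        simp [h, h', Set.indicator]
    · intro i
      simp only [hdiag]
      exact fk_one K hK k q hq
    · intro i j hij
      have := hoff i j hij
      refine (fkfun_le q K k _ (by linarith)).trans (by linarith)
    · intro ω
      rw [hVhat]
      congr 1
      refine Finset.sum_congr rfl fun i _ => Finset.sum_congr rfl fun j _ => ?_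
      by_cases h : D nn ω i = k <;> by_cases h' : D nn ω j = k <;> simp [h, h']
  refine ⟨key.mono fun nn h => h.1, key.mono fun nn h => ?_, ?_⟩
  · rw [h.2.1]
    congr 1
    simp only [dotProduct, Matrix.mulVec, Matrix.of_apply, Finset.mul_sum]
    refine Finset.sum_congr rfl fun i _ => Finset.sum_congr rfl fun j _ => ?_
    ring
  · refine squeeze_zero' (Eventually.of_forall fun nn => integral_nonneg fun ω => sq_nonneg _)
      (key.mono fun nn h => h.2.2) ?_
    have := (((tendsto_one_div_atTop_nhds_zero_nat (𝕜 := ℝ)).add L1).const_mul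
      (2 * ((K : ℝ) ^ 4 * M ^ 4))).add
      (((L2.const_mul (2 * (K : ℝ) ^ 4 * M ^ 2)).pow 2).const_mul 2)
    simpa using this

end
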